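/- arXiv:2302.12300 — 2 statements merged into one kernel-verified Lean document; each statement's English description precedes it below -/
import Mathlib

section
/- Let (X, M) be a measurable space, μ₁ a positive measure on (X, M), μ₂ a positive Borel measure on ℝ, and μ₃ a positive measure on (X, M) such that ψ·μ₁ ≤ μ₃ for some M-measurable density ψ : X → [0,∞) (in particular this holds when ψ is a density of the absolutely continuous part of μ₃ with respect to μ₁). Let N : X → ℝ be M-measurable and let 1 < p ≤ q < ∞, with p' = p/(p−1) and q' = q/(q−1). If B := sup_{r∈ℝ} μ₂([r,+∞))^{1/q} (∫_{{x : N(x)<r}} ψ(x)^{−p'/p} dμ₁(x))^{1/p'} is finite, then for every M-measurable function f : X → [0,+∞], (∫_ℝ (∫_{{x : N(x)<r}} f(x) dμ₁(x))^q dμ₂(r))^{1/q} ≤ min((p')^{1/p'} p^{1/q}, (q')^{1/p'} q^{1/q}) · B · (∫_X f(x)^p dμ₃(x))^{1/p}. -/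
open MeasureTheory ENNReal
open scoped NNReal

/-!
Let `ν` be the image under `N` of the dual weight `ψ ^ (-p' / p) • μ₁`, so that `B` is the supremum
of `μ₂ [r, ∞) ^ (1 / q) * ν (-∞, r) ^ (1 / p')`. Fix `θ ∈ (0, 1)`. Hölder's inequality with the
weight `ψ * ν (-∞, N x] ^ (θ * p / p')` bounds `∫_{N < r} f` by an integral of `f ^ p` over
`{N < r}` times a power of `∫_{t < r} ν (-∞, t] ^ (-θ) dν(t) ≤ (1 - θ)⁻¹ * ν (-∞, r) ^ (1 - θ)`;
the latter estimate, valid for every measure on a line, replaces the fundamental theorem of calculus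
in the presence of atoms. Minkowski's integral inequality with exponent `q / p` exchanges the
integrals, and the same estimate for `μ₂`, run from the other end, bounds the inner one by
`θ⁻¹ * B ^ q`. The outcome is the constant `(1 - θ) ^ (-1 / p') * θ ^ (-1 / q)`, and `θ = 1 / p`,
`θ = 1 / q` give the two terms of the minimum.

Both `μ₁` and `μ₂` are arbitrary, while Minkowski's inequality needs σ-finiteness. The finiteness of
`B` supplies it: the half-lines of infinite mass do not contribute.
-/

section LinearOrder

open Set

theorem exists_countable_cofinal_subset {α : Type*} [LinearOrder α] [TopologicalSpace α]
    [OrderClosedTopology α] [SecondCountableTopology α] (s : Set α) :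
    ∃ t ⊆ s, t.Countable ∧ ∀ a ∈ s, ∃ b ∈ t, a ≤ b := by
  by_cases hmax : ∃ m ∈ s, ∀ a ∈ s, a ≤ m
  · obtain ⟨m, hm, hle⟩ := hmax
    exact ⟨{m}, by simpa using hm, countable_singleton m, fun a ha => ⟨m, rfl, hle a ha⟩⟩
  · push Not at hmax
    obtain ⟨t, hts, htc, hunion⟩ :=
      TopologicalSpace.isOpen_biUnion_countable s Iio fun _ _ => isOpen_Iio
    refine ⟨t, hts, htc, fun a ha => ?_⟩
    obtain ⟨b, hb, hab⟩ := hmax a ha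
    have ha_mem : a ∈ ⋃ b ∈ t, Iio b := hunion ▸ mem_biUnion hb hab
    obtain ⟨c, hc, hac⟩ := mem_iUnion₂.1 ha_mem
    exact ⟨c, hc, le_of_lt hac⟩

section Measure

variable {α : Type*} [LinearOrder α] [TopologicalSpace α] [OrderClosedTopology α]
  [SecondCountableTopology α] [MeasurableSpace α]

theorem measure_le_of_forall_measure_Iic_le {μ : Measure α} {s : Set α} {C : ℝ≥0∞}
    (h : ∀ a ∈ s, μ (Iic a) ≤ C) : μ s ≤ C := by
  obtain ⟨t, hts, htc, hcof⟩ := exists_countable_cofinal_subset s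
  have hsub : s ⊆ ⋃ a ∈ t, Iic a := fun a ha =>
    let ⟨b, hb, hab⟩ := hcof a ha
    mem_biUnion hb hab
  have hdir : DirectedOn (Function.onFun (· ⊆ ·) Iic) t := fun a ha b hb => by
    rcases le_total a b with hab | hba
    · exact ⟨b, hb, Iic_subset_Iic.2 hab, Subset.rfl⟩
    · exact ⟨a, ha, Subset.rfl, Iic_subset_Iic.2 hba⟩
  calc μ s ≤ μ (⋃ a ∈ t, Iic a) := measure_mono hsub
    _ = ⨆ a ∈ t, μ (Iic a) := measure_biUnion_eq_iSup htc hdir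
    _ ≤ C := iSup₂_le fun a ha => h a (hts ha)

theorem measure_le_of_forall_measure_Ici_le {μ : Measure α} {s : Set α} {C : ℝ≥0∞}
    (h : ∀ a ∈ s, μ (Ici a) ≤ C) : μ s ≤ C :=
  measure_le_of_forall_measure_Iic_le (α := αᵒᵈ) h

theorem ae_measure_Iic_ne_zero (μ : Measure α) : ∀ᵐ a ∂μ, μ (Iic a) ≠ 0 := by
  have hnull : μ {a | μ (Iic a) = 0} ≤ 0 := measure_le_of_forall_measure_Iic_le fun _ ha => ha.le
  simpa [ae_iff] using hnull

theorem ae_measure_Ici_ne_zero (μ : Measure α) : ∀ᵐ a ∂μ, μ (Ici a) ≠ 0 :=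
  ae_measure_Iic_ne_zero (α := αᵒᵈ) μ

end Measure

section BorelSpace

variable {α : Type*} [LinearOrder α] [TopologicalSpace α] [OrderClosedTopology α]
  [MeasurableSpace α] [BorelSpace α]

theorem measurable_measure_Iic (μ : Measure α) : Measurable fun a => μ (Iic a) :=
  Monotone.measurable fun _ _ hab => measure_mono (Iic_subset_Iic.2 hab)

theorem measurable_measure_Iio (μ : Measure α) : Measurable fun a => μ (Iio a) :=
  Monotone.measurable fun _ _ hab => measure_mono (Iio_subset_Iio hab)

theorem measurable_measure_Ici (μ : Measure α) : Measurable fun a => μ (Ici a) :=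
  measurable_measure_Iic (α := αᵒᵈ) μ

variable [SecondCountableTopology α]

theorem sigmaFinite_restrict_setOf_measure_Iic_ne_top (μ : Measure α) :
    SigmaFinite (μ.restrict {a | μ (Iic a) ≠ ∞}) := by
  set s := {a | μ (Iic a) ≠ ∞}
  have hs : MeasurableSet s := (measurable_measure_Iic μ (measurableSet_singleton ∞)).compl
  obtain ⟨t, hts, htc, hcof⟩ := exists_countable_cofinal_subset s
  refine Measure.sigmaFinite_of_countable (S := insert sᶜ (Iic '' t)) ((htc.image _).insert _) ?_ ?_
  · rintro _ (rfl | ⟨a, ha, rfl⟩)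
    · simp [Measure.restrict_apply hs.compl]
    · exact (Measure.restrict_apply_le _ _).trans_lt (hts ha).lt_top
  · refine eq_univ_of_forall fun a => ?_
    by_cases ha : a ∈ s
    · obtain ⟨b, hb, hab⟩ := hcof a ha
      exact ⟨Iic b, Or.inr ⟨b, hb, rfl⟩, hab⟩
    · exact ⟨sᶜ, Or.inl rfl, ha⟩

theorem sigmaFinite_restrict_setOf_measure_Ici_ne_top (μ : Measure α) :
    SigmaFinite (μ.restrict {a | μ (Ici a) ≠ ∞}) :=
  sigmaFinite_restrict_setOf_measure_Iic_ne_top (α := αᵒᵈ) μ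

end BorelSpace

end LinearOrder

section DistributionBound

open Set

theorem setLIntegral_Ioo_zero_ofReal_rpow_neg {m θ : ℝ} (hm : 0 ≤ m) (hθ : θ < 1) :
    ∫⁻ s in Ioo 0 m, ENNReal.ofReal (s ^ (-θ)) =
      ENNReal.ofReal (1 - θ)⁻¹ * ENNReal.ofReal m ^ (1 - θ) := by
  have hint : IntegrableOn (fun s : ℝ => s ^ (-θ)) (Ioo 0 m) :=
    (intervalIntegral.intervalIntegrable_rpow' (by linarith)).1.mono_set Ioo_subset_Ioc_self
  have hnonneg : ∀ᵐ s ∂volume.restrict (Ioo 0 m), 0 ≤ s ^ (-θ) := by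
    filter_upwards [ae_restrict_mem measurableSet_Ioo] with s hs using Real.rpow_nonneg hs.1.le _
  have hvalue : ∫ s in Ioo 0 m, s ^ (-θ) = (1 - θ)⁻¹ * m ^ (1 - θ) := by
    rw [← integral_Ioc_eq_integral_Ioo, ← intervalIntegral.integral_of_le hm,
      integral_rpow (Or.inl (by linarith)), show -θ + 1 = 1 - θ by ring,
      Real.zero_rpow (by linarith), sub_zero, div_eq_inv_mul]
  rw [← ofReal_integral_eq_lintegral_ofReal hint hnonneg, hvalue,
    ENNReal.ofReal_mul (inv_nonneg.2 (by linarith)),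
    ENNReal.ofReal_rpow_of_nonneg hm (by linarith)]

variable {X : Type*} [MeasurableSpace X] {ν : Measure X} {U : X → ℝ≥0∞}

theorem measure_lt_toReal_rpow_neg_le [IsFiniteMeasure ν] (h : ∀ s, ν {x | U x ≤ s} ≤ s) {θ t : ℝ}
    (hθ : 0 < θ) (ht : 0 < t) :
    ν {x | t < (U x).toReal ^ (-θ)} ≤
      volume.restrict (Ioo 0 (ν univ).toReal) {s | t < s ^ (-θ)} := by
  set c := t ^ (-θ)⁻¹
  have hc : 0 < c := Real.rpow_pos_of_pos ht _
  have lt_rpow_iff {s : ℝ} (hs : 0 < s) : t < s ^ (-θ) ↔ s < c := by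
    rw [← Real.lt_rpow_inv_iff_of_neg ht hs (inv_neg''.2 (neg_neg_of_pos hθ)), inv_inv]
  have hsub : {x | t < (U x).toReal ^ (-θ)} ⊆ {x | U x ≤ ENNReal.ofReal c} := by
    intro x (hx : t < (U x).toReal ^ (-θ))
    have hU_pos : 0 < (U x).toReal := by
      refine toReal_nonneg.lt_of_ne fun h0 => ?_
      rw [← h0, Real.zero_rpow (neg_ne_zero.2 hθ.ne')] at hx
      exact ht.not_gt hx
    exact (ENNReal.le_ofReal_iff_toReal_le (toReal_pos_iff.1 hU_pos).2.ne hc.le).2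
      ((lt_rpow_iff hU_pos).1 hx).le
  calc ν {x | t < (U x).toReal ^ (-θ)}
      ≤ min (ν univ) (ENNReal.ofReal c) :=
        le_min (measure_mono (subset_univ _)) ((measure_mono hsub).trans (h _))
    _ = volume (Ioo 0 (min (ν univ).toReal c)) := by
        rw [Real.volume_Ioo, sub_zero, ENNReal.ofReal_min, ofReal_toReal (measure_ne_top ν univ)]
    _ ≤ volume.restrict (Ioo 0 (ν univ).toReal) {s | t < s ^ (-θ)} := by
        rw [Measure.restrict_apply' measurableSet_Ioo]
        exact measure_mono fun s hs => ⟨(lt_rpow_iff hs.1).2 (hs.2.trans_le (min_le_right _ _)),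
          hs.1, hs.2.trans_le (min_le_left _ _)⟩

-- The hypothesis says that `U` is distributed no lower than the identity on `(0, ν univ)`, and
-- the right-hand side is the integral of `s ^ (-θ)` over that interval.
theorem lintegral_rpow_neg_le_of_measure_le (hU : Measurable U) (h : ∀ s, ν {x | U x ≤ s} ≤ s)
    {θ : ℝ} (h0 : 0 < θ) (h1 : θ < 1) :
    ∫⁻ x, U x ^ (-θ) ∂ν ≤ ENNReal.ofReal (1 - θ)⁻¹ * ν univ ^ (1 - θ) := by
  by_cases hν : ν univ = ∞
  · have hconst : ENNReal.ofReal (1 - θ)⁻¹ ≠ 0 := by simpa using h1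
    simp [hν, ENNReal.top_rpow_of_pos (sub_pos.2 h1), ENNReal.mul_top hconst]
  have : IsFiniteMeasure ν := ⟨lt_top_iff_ne_top.2 hν⟩
  have hU_ne_zero : ∀ᵐ x ∂ν, U x ≠ 0 := by simpa [ae_iff] using h 0
  have hU_toReal : ∫⁻ x, U x ^ (-θ) ∂ν = ∫⁻ x, ENNReal.ofReal ((U x).toReal ^ (-θ)) ∂ν := by
    refine lintegral_congr_ae ?_
    filter_upwards [hU_ne_zero] with x hx
    by_cases htop : U x = ∞
    · simp [htop, h0, h0.ne']
    · rw [← ENNReal.ofReal_rpow_of_pos (toReal_pos hx htop), ofReal_toReal htop]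
  have hnonneg : ∀ᵐ s ∂volume.restrict (Ioo 0 (ν univ).toReal), 0 ≤ s ^ (-θ) := by
    filter_upwards [ae_restrict_mem measurableSet_Ioo] with s hs using Real.rpow_nonneg hs.1.le _
  calc ∫⁻ x, U x ^ (-θ) ∂ν
      = ∫⁻ t in Ioi 0, ν {x | t < (U x).toReal ^ (-θ)} := by
        rw [hU_toReal, lintegral_eq_lintegral_meas_lt ν
          (.of_forall fun x => Real.rpow_nonneg toReal_nonneg _) (by fun_prop)]
    _ ≤ ∫⁻ t in Ioi 0, volume.restrict (Ioo 0 (ν univ).toReal) {s | t < s ^ (-θ)} :=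
        setLIntegral_mono' measurableSet_Ioi fun t ht => measure_lt_toReal_rpow_neg_le h h0 ht
    _ = ENNReal.ofReal (1 - θ)⁻¹ * ν univ ^ (1 - θ) := by
        rw [← lintegral_eq_lintegral_meas_lt _ hnonneg (by fun_prop),
          setLIntegral_Ioo_zero_ofReal_rpow_neg toReal_nonneg h1, ofReal_toReal hν]

variable {α : Type*} [LinearOrder α] [TopologicalSpace α] [OrderClosedTopology α]
  [SecondCountableTopology α] [MeasurableSpace α] [BorelSpace α] {θ : ℝ}

theorem setLIntegral_Iio_measure_Iic_rpow_neg_le (ν : Measure α) (r : α) (h0 : 0 < θ)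
    (h1 : θ < 1) :
    ∫⁻ t in Iio r, ν (Iic t) ^ (-θ) ∂ν ≤ ENNReal.ofReal (1 - θ)⁻¹ * ν (Iio r) ^ (1 - θ) := by
  have hdist (s : ℝ≥0∞) : ν.restrict (Iio r) {t | ν (Iic t) ≤ s} ≤ s :=
    (Measure.restrict_apply_le _ _).trans (measure_le_of_forall_measure_Iic_le fun _ ht => ht)
  simpa using lintegral_rpow_neg_le_of_measure_le (measurable_measure_Iic ν) hdist h0 h1

theorem setLIntegral_Ioi_measure_Ici_rpow_neg_le (ν : Measure α) (r : α) (h0 : 0 < θ)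
    (h1 : θ < 1) :
    ∫⁻ t in Ioi r, ν (Ici t) ^ (-θ) ∂ν ≤ ENNReal.ofReal (1 - θ)⁻¹ * ν (Ioi r) ^ (1 - θ) :=
  setLIntegral_Iio_measure_Iic_rpow_neg_le (α := αᵒᵈ) ν r h0 h1

end DistributionBound

section Minkowski

open Set

theorem rpow_inv_le_of_le_mul_rpow_inv {s s' : ℝ} (hs : s.HolderConjugate s') {A R : ℝ≥0∞}
    (hA : A ≠ ∞) (h : A ≤ R * A ^ s'⁻¹) : A ^ s⁻¹ ≤ R := by
  by_cases hA0 : A = 0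
  · simp [hA0, hs.pos]
  have hsplit : A ^ s⁻¹ * A ^ s'⁻¹ = A := by
    rw [← ENNReal.rpow_add _ _ hA0 hA, hs.inv_add_inv_eq_one, ENNReal.rpow_one]
  refine (ENNReal.mul_le_mul_iff_left ?_ ?_).1 (hsplit.trans_le h)
  · simp [ENNReal.rpow_eq_zero_iff, hA0, hA]
  · simp [ENNReal.rpow_eq_top_iff, hA0, hA]

theorem exists_measurable_le_lintegral_lt_top {Y : Type*} [MeasurableSpace Y] {κ : Measure Y}
    [SigmaFinite κ] {f : Y → ℝ≥0∞} {L : ℝ≥0∞} (hL : L < ∫⁻ y, f y ∂κ) :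
    ∃ g : Y → ℝ≥0∞, Measurable g ∧ g ≤ f ∧ ∫⁻ y, g y ∂κ < ∞ ∧ L < ∫⁻ y, g y ∂κ := by
  simp only [lintegral_eq_nnreal, lt_iSup_iff] at hL
  obtain ⟨φ, hφ, hLφ⟩ := hL
  rw [← SimpleFunc.lintegral_eq_lintegral] at hLφ
  obtain ⟨g, hgφ, hg_top, hLg⟩ := SimpleFunc.exists_lt_lintegral_simpleFunc_of_lt_lintegral hLφ
  exact ⟨fun y => g y, by fun_prop, fun y => (coe_le_coe.2 (hgφ y)).trans (hφ y), hg_top, hLg⟩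

variable {X Y : Type*} [MeasurableSpace X] [MeasurableSpace Y] {μ : Measure X} [SFinite μ]
  {κ : Measure Y} {k : Y → X → ℝ≥0∞}

theorem lintegral_lintegral_mul_rpow_sub_one_le [SFinite κ] (hk : Measurable (Function.uncurry k))
    {s s' : ℝ} (hs : s.HolderConjugate s') {H : Y → ℝ≥0∞} (hH : Measurable H) :
    ∫⁻ y, (∫⁻ x, k y x ∂μ) * H y ^ (s - 1) ∂κ ≤
      (∫⁻ x, (∫⁻ y, k y x ^ s ∂κ) ^ s⁻¹ ∂μ) * (∫⁻ y, H y ^ s ∂κ) ^ s'⁻¹ := by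
  have hpow (y : Y) : (H y ^ (s - 1)) ^ s' = H y ^ s := by
    rw [← ENNReal.rpow_mul, hs.sub_one_mul_conj]
  calc ∫⁻ y, (∫⁻ x, k y x ∂μ) * H y ^ (s - 1) ∂κ
      = ∫⁻ y, ∫⁻ x, k y x * H y ^ (s - 1) ∂μ ∂κ := by
        refine lintegral_congr fun y => (lintegral_mul_const _ ?_).symm
        exact hk.comp measurable_prodMk_left
    _ = ∫⁻ x, ∫⁻ y, k y x * H y ^ (s - 1) ∂κ ∂μ :=
        lintegral_lintegral_swap
          (hk.mul ((hH.comp measurable_fst).pow_const _)).aemeasurable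
    _ ≤ ∫⁻ x, (∫⁻ y, k y x ^ s ∂κ) ^ s⁻¹ * (∫⁻ y, H y ^ s ∂κ) ^ s'⁻¹ ∂μ := by
        refine lintegral_mono fun x => ?_
        have hkx : Measurable fun y => k y x := hk.comp measurable_prodMk_right
        simpa only [Pi.mul_apply, hpow, one_div] using ENNReal.lintegral_mul_le_Lp_mul_Lq κ hs
          hkx.aemeasurable (hH.pow_const (s - 1)).aemeasurable
    _ = (∫⁻ x, (∫⁻ y, k y x ^ s ∂κ) ^ s⁻¹ ∂μ) * (∫⁻ y, H y ^ s ∂κ) ^ s'⁻¹ :=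
        lintegral_mul_const _ ((hk.pow_const s).lintegral_prod_left'.pow_const _)

-- Duality: test `∫ k y x ∂μ` against `H ^ (s - 1)`, for `H` below it with `∫ H ^ s ∂κ` finite.
theorem lintegral_lintegral_rpow_le [SigmaFinite κ] (hk : Measurable (Function.uncurry k)) {s : ℝ}
    (hs : 1 ≤ s) :
    (∫⁻ y, (∫⁻ x, k y x ∂μ) ^ s ∂κ) ^ s⁻¹ ≤ ∫⁻ x, (∫⁻ y, k y x ^ s ∂κ) ^ s⁻¹ ∂μ := by
  rcases hs.eq_or_lt with rfl | hs
  · simpa using (lintegral_lintegral_swap hk.aemeasurable).le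
  have hs0 : 0 < s := by linarith
  have hconj : s.HolderConjugate s.conjExponent := .conjExponent hs
  rw [ENNReal.rpow_inv_le_iff hs0]
  refine le_of_forall_lt fun L hL => ?_
  obtain ⟨g, hg, hgle, hg_top, hLg⟩ := exists_measurable_le_lintegral_lt_top hL
  refine hLg.trans_le ?_
  rw [← ENNReal.rpow_inv_le_iff hs0]
  refine rpow_inv_le_of_le_mul_rpow_inv hconj hg_top.ne ?_
  set H : Y → ℝ≥0∞ := fun y => g y ^ s⁻¹
  have hHs (y : Y) : H y ^ s = g y := ENNReal.rpow_inv_rpow hs0.ne' _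
  have hgH (y : Y) : g y ≤ (∫⁻ x, k y x ∂μ) * H y ^ (s - 1) := by
    calc g y = H y ^ (1 + (s - 1)) := by rw [add_sub_cancel, hHs]
      _ = H y * H y ^ (s - 1) := by
          rw [ENNReal.rpow_add_of_nonneg _ _ zero_le_one (by linarith), ENNReal.rpow_one]
      _ ≤ (∫⁻ x, k y x ∂μ) * H y ^ (s - 1) := by
          gcongr
          exact (ENNReal.rpow_inv_le_iff hs0).2 (hgle y)
  calc ∫⁻ y, g y ∂κ ≤ ∫⁻ y, (∫⁻ x, k y x ∂μ) * H y ^ (s - 1) ∂κ := lintegral_mono hgH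
    _ ≤ _ := lintegral_lintegral_mul_rpow_sub_one_le hk hconj (hg.pow_const _)
    _ = _ := by simp only [hHs]

theorem lintegral_mul_setLIntegral_lt_rpow_le {α : Type*} [LinearOrder α] [TopologicalSpace α]
    [OrderClosedTopology α] [SecondCountableTopology α] [MeasurableSpace α]
    [OpensMeasurableSpace α] {κ : Measure α} [SigmaFinite κ] {N : X → α} (hN : Measurable N)
    {g : X → ℝ≥0∞} (hg : Measurable g) {h : α → ℝ≥0∞} (hh : Measurable h) {s : ℝ} (hs : 1 ≤ s) :
    (∫⁻ r, (h r * ∫⁻ x in {x | N x < r}, g x ∂μ) ^ s ∂κ) ^ s⁻¹ ≤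
      ∫⁻ x, g x * (∫⁻ r in Ioi (N x), h r ^ s ∂κ) ^ s⁻¹ ∂μ := by
  have hs0 : 0 < s := by linarith
  have hlt : MeasurableSet {z : α × X | N z.2 < z.1} :=
    measurableSet_lt (hN.comp measurable_snd) measurable_fst
  set k : α → X → ℝ≥0∞ := fun r x => {z : α × X | N z.2 < z.1}.indicator
    (fun z => h z.1 * g z.2) (r, x)
  have hk : Measurable (Function.uncurry k) :=
    ((hh.comp measurable_fst).mul (hg.comp measurable_snd)).indicator hlt
  have hk_fst (r : α) : ∫⁻ x, k r x ∂μ = h r * ∫⁻ x in {x | N x < r}, g x ∂μ := by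
    rw [← lintegral_const_mul _ hg, ← lintegral_indicator (measurableSet_lt hN measurable_const)]
    rfl
  have hk_snd (x : X) : (∫⁻ r, k r x ^ s ∂κ) ^ s⁻¹ =
      g x * (∫⁻ r in Ioi (N x), h r ^ s ∂κ) ^ s⁻¹ := by
    have hpow (r : α) : k r x ^ s = (Ioi (N x)).indicator (fun r => g x ^ s * h r ^ s) r := by
      by_cases hr : N x < r
      · simp [k, hr, ENNReal.mul_rpow_of_nonneg _ _ hs0.le, mul_comm]
      · simp [k, hr, hs0]
    simp only [hpow]
    rw [lintegral_indicator measurableSet_Ioi, lintegral_const_mul _ (hh.pow_const s),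
      ENNReal.mul_rpow_of_nonneg _ _ (inv_nonneg.2 hs0.le), ENNReal.rpow_rpow_inv hs0.ne']
  simpa only [hk_fst, hk_snd] using lintegral_lintegral_rpow_le (μ := μ) (κ := κ) hk hs

end Minkowski

section Muckenhoupt

open Set

theorem rpow_mul_rpow_le_rpow_of_rpow_mul_rpow_le {x y B : ℝ≥0∞} {p' q c : ℝ} (hq : 0 < q)
    (hc : 0 ≤ c) (h : x ^ (1 / q) * y ^ (1 / p') ≤ B) :
    x ^ c * y ^ (c * q / p') ≤ B ^ (c * q) := by
  have hcq : 0 ≤ c * q := by positivity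
  calc x ^ c * y ^ (c * q / p') = (x ^ (1 / q) * y ^ (1 / p')) ^ (c * q) := by
        rw [ENNReal.mul_rpow_of_nonneg _ _ hcq, ← ENNReal.rpow_mul, ← ENNReal.rpow_mul]
        congr 2 <;> field_simp
    _ ≤ B ^ (c * q) := ENNReal.rpow_le_rpow h hcq

variable {α : Type*} [LinearOrder α] [TopologicalSpace α] [OrderClosedTopology α]
  [SecondCountableTopology α] [MeasurableSpace α] {κ ν : Measure α} {p' q θ : ℝ} {B : ℝ≥0∞}

theorem measure_Ioi_rpow_mul_measure_Iic_rpow_le (hp' : 0 < p') (hq : 0 < q)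
    (hB : ∀ r, κ (Ici r) ^ (1 / q) * ν (Iio r) ^ (1 / p') ≤ B) (t : α) :
    κ (Ioi t) ^ (1 / q) * ν (Iic t) ^ (1 / p') ≤ B := by
  have hscaled : (ν (Iic t) ^ (q / p') • κ) (Ioi t) ≤ B ^ q := by
    refine measure_le_of_forall_measure_Ici_le fun r (hr : t < r) => ?_
    calc (ν (Iic t) ^ (q / p') • κ) (Ici r)
        ≤ κ (Ici r) * ν (Iio r) ^ (q / p') := by
          rw [Measure.smul_apply, smul_eq_mul, mul_comm]
          gcongr
      _ ≤ B ^ q := by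
          simpa using rpow_mul_rpow_le_rpow_of_rpow_mul_rpow_le hq zero_le_one (hB r)
  rw [← ENNReal.rpow_le_rpow_iff hq, ENNReal.mul_rpow_of_nonneg _ _ hq.le, ← ENNReal.rpow_mul,
    ← ENNReal.rpow_mul, one_div_mul_cancel hq.ne', ENNReal.rpow_one, one_div_mul_eq_div, mul_comm]
  exact hscaled

theorem ae_measure_Iio_ne_top (hp' : 0 < p') (hq : 0 < q) (hB_top : B ≠ ∞)
    (hB : ∀ r, κ (Ici r) ^ (1 / q) * ν (Iio r) ^ (1 / p') ≤ B) :
    ∀ᵐ r ∂κ, ν (Iio r) ≠ ∞ := by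
  filter_upwards [ae_measure_Ici_ne_zero κ] with r hr htop
  have hpow : κ (Ici r) ^ (1 / q) ≠ 0 := by simp [ENNReal.rpow_eq_zero_iff, hr, hq.le]
  have hBr := hB r
  rw [htop, ENNReal.top_rpow_of_pos (by positivity), ENNReal.mul_top hpow] at hBr
  exact hB_top (top_le_iff.1 hBr)

variable [BorelSpace α]

theorem setLIntegral_Ioi_measure_Iio_rpow_le (hq : 0 < q) (hB_top : B ≠ ∞)
    (hB : ∀ r, κ (Ici r) ^ (1 / q) * ν (Iio r) ^ (1 / p') ≤ B) (h0 : 0 < θ) (h1 : θ < 1) (t : α) :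
    ∫⁻ r in Ioi t, ν (Iio r) ^ ((1 - θ) * q / p') ∂κ ≤
      B ^ ((1 - θ) * q) * (ENNReal.ofReal θ⁻¹ * κ (Ioi t) ^ θ) := by
  have hθ : 0 < 1 - θ := sub_pos.2 h1
  have hle : ∀ᵐ r ∂κ, ν (Iio r) ^ ((1 - θ) * q / p') ≤
      B ^ ((1 - θ) * q) * κ (Ici r) ^ (-(1 - θ)) := by
    filter_upwards [ae_measure_Ici_ne_zero κ] with r hr
    rw [ENNReal.rpow_neg, ← div_eq_mul_inv, ENNReal.le_div_iff_mul_le, mul_comm]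
    · exact rpow_mul_rpow_le_rpow_of_rpow_mul_rpow_le hq hθ.le (hB r)
    · exact Or.inl (by simp [ENNReal.rpow_eq_zero_iff, hr, h1.le])
    · exact Or.inr (ENNReal.rpow_ne_top_of_nonneg (by positivity) hB_top)
  calc ∫⁻ r in Ioi t, ν (Iio r) ^ ((1 - θ) * q / p') ∂κ
      ≤ ∫⁻ r in Ioi t, B ^ ((1 - θ) * q) * κ (Ici r) ^ (-(1 - θ)) ∂κ :=
        lintegral_mono_ae (ae_restrict_of_ae hle)
    _ = B ^ ((1 - θ) * q) * ∫⁻ r in Ioi t, κ (Ici r) ^ (-(1 - θ)) ∂κ :=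
        lintegral_const_mul _ ((measurable_measure_Ici κ).pow_const _)
    _ ≤ B ^ ((1 - θ) * q) * (ENNReal.ofReal θ⁻¹ * κ (Ioi t) ^ θ) := by
        gcongr
        simpa using setLIntegral_Ioi_measure_Ici_rpow_neg_le κ t hθ (by linarith)

theorem measure_Iic_rpow_mul_setLIntegral_Ioi_le (hp' : 0 < p') (hq : 0 < q) (hB_top : B ≠ ∞)
    (hB : ∀ r, κ (Ici r) ^ (1 / q) * ν (Iio r) ^ (1 / p') ≤ B) (h0 : 0 < θ) (h1 : θ < 1) (t : α) :
    ν (Iic t) ^ (θ * q / p') * ∫⁻ r in Ioi t, ν (Iio r) ^ ((1 - θ) * q / p') ∂κ ≤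
      ENNReal.ofReal θ⁻¹ * B ^ q := by
  calc ν (Iic t) ^ (θ * q / p') * ∫⁻ r in Ioi t, ν (Iio r) ^ ((1 - θ) * q / p') ∂κ
      ≤ ν (Iic t) ^ (θ * q / p') *
          (B ^ ((1 - θ) * q) * (ENNReal.ofReal θ⁻¹ * κ (Ioi t) ^ θ)) := by
        gcongr
        exact setLIntegral_Ioi_measure_Iio_rpow_le hq hB_top hB h0 h1 t
    _ = ENNReal.ofReal θ⁻¹ * (B ^ ((1 - θ) * q) * (κ (Ioi t) ^ θ * ν (Iic t) ^ (θ * q / p'))) := by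
        ring
    _ ≤ ENNReal.ofReal θ⁻¹ * (B ^ ((1 - θ) * q) * B ^ (θ * q)) := by
        gcongr
        exact rpow_mul_rpow_le_rpow_of_rpow_mul_rpow_le hq h0.le
          (measure_Ioi_rpow_mul_measure_Iic_rpow_le hp' hq hB t)
    _ = ENNReal.ofReal θ⁻¹ * B ^ q := by
        rw [← ENNReal.rpow_add_of_nonneg _ _ (mul_nonneg (sub_nonneg.2 h1.le) hq.le)
          (by positivity)]
        ring_nf

end Muckenhoupt

section WeightedHolder

theorem lintegral_le_lintegral_rpow_mul_weight {X : Type*} [MeasurableSpace X] {μ : Measure X}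
    {p p' : ℝ} (hpp' : p.HolderConjugate p') {f w : X → ℝ≥0∞} (hf : Measurable f)
    (hw : Measurable w) (hw_zero : ∀ᵐ x ∂μ, w x ≠ 0) (hw_top : ∀ᵐ x ∂μ, w x ≠ ∞) :
    ∫⁻ x, f x ∂μ ≤
      (∫⁻ x, f x ^ p * w x ∂μ) ^ (1 / p) * (∫⁻ x, w x ^ (-(p' / p)) ∂μ) ^ (1 / p') := by
  have hp : 0 < p := hpp'.pos
  have hsplit : ∀ᵐ x ∂μ, f x = (f x * w x ^ (1 / p)) * w x ^ (-(1 / p)) := by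
    filter_upwards [hw_zero, hw_top] with x h0 htop
    rw [mul_assoc, ← ENNReal.rpow_add _ _ h0 htop, add_neg_cancel, ENNReal.rpow_zero, mul_one]
  have hpow_left (x : X) : (f x * w x ^ (1 / p)) ^ p = f x ^ p * w x := by
    rw [ENNReal.mul_rpow_of_nonneg _ _ hp.le, ← ENNReal.rpow_mul, one_div_mul_cancel hp.ne',
      ENNReal.rpow_one]
  have hpow_right (x : X) : (w x ^ (-(1 / p))) ^ p' = w x ^ (-(p' / p)) := by
    rw [← ENNReal.rpow_mul, neg_mul, one_div_mul_eq_div]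
  rw [lintegral_congr_ae hsplit]
  simpa only [Pi.mul_apply, hpow_left, hpow_right] using
    ENNReal.lintegral_mul_le_Lp_mul_Lq μ hpp' (f := fun x => f x * w x ^ (1 / p))
      (g := fun x => w x ^ (-(1 / p))) (by fun_prop) (by fun_prop)

end WeightedHolder

section DualLaw

open Set

/-- The law of `N` under `ψ ^ (-c) • μ`. With `c = p' / p`, its value on `Iio r` is the integral of
the dual weight over `{x | N x < r}` in the constant `B` of the Hardy inequality, so that `B`
becomes a condition on two measures on the line. Since `ψ` takes finite values, the density
`ψ ^ (-c)` vanishes nowhere, and it is `∞` where `ψ = 0`. -/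
noncomputable def dualLaw {X α : Type*} [MeasurableSpace X] [MeasurableSpace α] (μ : Measure X)
    (ψ : X → ℝ≥0) (N : X → α) (c : ℝ) : Measure α :=
  (μ.withDensity fun x => (ψ x : ℝ≥0∞) ^ (-c)).map N

variable {X α : Type*} [MeasurableSpace X] [MeasurableSpace α] {μ : Measure X} {ψ : X → ℝ≥0}
  {N : X → α} {c : ℝ}

theorem setLIntegral_dualLaw (hψ : Measurable ψ) (hN : Measurable N) {s : Set α}
    (hs : MeasurableSet s) {h : α → ℝ≥0∞} (hh : Measurable h) :
    ∫⁻ t in s, h t ∂dualLaw μ ψ N c = ∫⁻ x in N ⁻¹' s, (ψ x : ℝ≥0∞) ^ (-c) * h (N x) ∂μ := by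
  rw [dualLaw, setLIntegral_map hs hh hN, setLIntegral_withDensity_eq_setLIntegral_mul _
    (by fun_prop) (by fun_prop) (hN hs)]
  rfl

theorem dualLaw_apply (hN : Measurable N) {s : Set α} (hs : MeasurableSet s) :
    dualLaw μ ψ N c s = ∫⁻ x in N ⁻¹' s, (ψ x : ℝ≥0∞) ^ (-c) ∂μ := by
  rw [dualLaw, Measure.map_apply hN hs, withDensity_apply _ (hN hs)]

theorem dualLaw_restrict_preimage (hN : Measurable N) {s : Set α} (hs : MeasurableSet s) :
    dualLaw (μ.restrict (N ⁻¹' s)) ψ N c = (dualLaw μ ψ N c).restrict s := by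
  rw [dualLaw, dualLaw, Measure.restrict_map hN hs, restrict_withDensity (hN hs)]

theorem absolutelyContinuous_withDensity_rpow_neg (hψ : Measurable ψ) (hc : 0 ≤ c) :
    μ ≪ μ.withDensity fun x => (ψ x : ℝ≥0∞) ^ (-c) :=
  withDensity_absolutelyContinuous' (by fun_prop)
    (.of_forall fun x => by simp [ENNReal.rpow_eq_zero_iff, hc.not_gt])

theorem ae_of_ae_dualLaw (hψ : Measurable ψ) (hN : Measurable N) (hc : 0 ≤ c) {P : α → Prop}
    (hP : ∀ᵐ t ∂dualLaw μ ψ N c, P t) : ∀ᵐ x ∂μ, P (N x) :=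
  (absolutelyContinuous_withDensity_rpow_neg hψ hc).ae_le (ae_of_ae_map hN.aemeasurable hP)

theorem sFinite_of_sigmaFinite_dualLaw (hψ : Measurable ψ) (hN : Measurable N) (hc : 0 ≤ c)
    [hfin : SigmaFinite (dualLaw μ ψ N c)] : SFinite μ :=
  have := SigmaFinite.of_map _ hN.aemeasurable hfin
  sFinite_of_absolutelyContinuous (absolutelyContinuous_withDensity_rpow_neg hψ hc)

theorem restrict_preimage_eq_zero_of_dualLaw_eq_zero (hψ : Measurable ψ) (hN : Measurable N)
    (hc : 0 ≤ c) {s : Set α} (hs : MeasurableSet s) (h : dualLaw μ ψ N c s = 0) :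
    μ.restrict (N ⁻¹' s) = 0 := by
  rw [dualLaw, Measure.map_apply hN hs] at h
  exact Measure.restrict_eq_zero.2 (absolutelyContinuous_withDensity_rpow_neg hψ hc h)

theorem ae_restrict_ne_zero_of_dualLaw_ne_top (hψ : Measurable ψ) (hN : Measurable N)
    (hc : 0 < c) {s : Set α} (hs : MeasurableSet s) (h : dualLaw μ ψ N c s ≠ ∞) :
    ∀ᵐ x ∂μ.restrict (N ⁻¹' s), ψ x ≠ 0 := by
  rw [dualLaw_apply hN hs] at h
  filter_upwards [ae_lt_top (by fun_prop) h] with x hx hψx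
  simp [hψx, hc] at hx

end DualLaw

section Hardy

open Set

/-- The weight `ψ * U ^ (θ * p / p')` against which Hölder's inequality is applied, where `U x` is
the mass that the dual law gives to the half-line up to `N x`, and `θ ∈ (0, 1)` is a free
parameter. -/
noncomputable def hardyWeight {X α : Type*} [MeasurableSpace X] [Preorder α] [MeasurableSpace α]
    (μ : Measure X) (ψ : X → ℝ≥0) (N : X → α) (p p' θ : ℝ) (x : X) : ℝ≥0∞ :=
  ψ x * dualLaw μ ψ N (p' / p) (Iic (N x)) ^ (θ * p / p')

variable {X α : Type*} [MeasurableSpace X] [LinearOrder α] [TopologicalSpace α]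
  [OrderClosedTopology α] [MeasurableSpace α] [BorelSpace α] {μ : Measure X} {κ : Measure α}
  {ψ : X → ℝ≥0} {N : X → α} {f : X → ℝ≥0∞} {p p' q θ : ℝ} {B : ℝ≥0∞}

theorem measurable_hardyWeight (hψ : Measurable ψ) (hN : Measurable N) :
    Measurable (hardyWeight μ ψ N p p' θ) :=
  hψ.coe_nnreal_ennreal.mul (((measurable_measure_Iic _).comp hN).pow_const _)

theorem ae_restrict_hardyWeight_ne_top (hN : Measurable N) (hp : 0 ≤ p) (hp' : 0 ≤ p') (h0 : 0 ≤ θ)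
    {r : α} (hr : dualLaw μ ψ N (p' / p) (Iio r) ≠ ∞) :
    ∀ᵐ x ∂μ.restrict (N ⁻¹' Iio r), hardyWeight μ ψ N p p' θ x ≠ ∞ := by
  filter_upwards [ae_restrict_mem (hN measurableSet_Iio)] with x hx
  exact mul_ne_top coe_ne_top (rpow_ne_top_of_nonneg (by positivity)
    (measure_ne_top_of_subset (Iic_subset_Iio.2 hx) hr))

variable [SecondCountableTopology α]

theorem ae_restrict_hardyWeight_ne_zero (hψ : Measurable ψ) (hN : Measurable N) (hp : 0 < p)
    (hp' : 0 < p') {r : α} (hr : dualLaw μ ψ N (p' / p) (Iio r) ≠ ∞) :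
    ∀ᵐ x ∂μ.restrict (N ⁻¹' Iio r), hardyWeight μ ψ N p p' θ x ≠ 0 := by
  have hc : 0 < p' / p := by positivity
  filter_upwards [ae_restrict_mem (hN measurableSet_Iio),
    ae_restrict_ne_zero_of_dualLaw_ne_top hψ hN hc measurableSet_Iio hr,
    ae_restrict_of_ae (ae_of_ae_dualLaw hψ hN hc.le (ae_measure_Iic_ne_zero _))] with x hx hψx hU
  have hU_top : dualLaw μ ψ N (p' / p) (Iic (N x)) ≠ ∞ :=
    measure_ne_top_of_subset (Iic_subset_Iio.2 hx) hr
  simp [hardyWeight, hψx, ENNReal.rpow_eq_zero_iff, hU, hU_top]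

theorem setLIntegral_hardyWeight_rpow_neg_le (hψ : Measurable ψ) (hN : Measurable N) (hp : 0 < p)
    (hp' : 0 < p') (h0 : 0 < θ) (h1 : θ < 1) {r : α}
    (hr : dualLaw μ ψ N (p' / p) (Iio r) ≠ ∞) :
    ∫⁻ x in N ⁻¹' Iio r, hardyWeight μ ψ N p p' θ x ^ (-(p' / p)) ∂μ ≤
      ENNReal.ofReal (1 - θ)⁻¹ * dualLaw μ ψ N (p' / p) (Iio r) ^ (1 - θ) := by
  set ν := dualLaw μ ψ N (p' / p)
  calc ∫⁻ x in N ⁻¹' Iio r, hardyWeight μ ψ N p p' θ x ^ (-(p' / p)) ∂μ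
      = ∫⁻ x in N ⁻¹' Iio r, (ψ x : ℝ≥0∞) ^ (-(p' / p)) * ν (Iic (N x)) ^ (-θ) ∂μ := by
        refine setLIntegral_congr_fun (hN measurableSet_Iio) fun x hx => ?_
        have hU_top : ν (Iic (N x)) ≠ ∞ := measure_ne_top_of_subset (Iic_subset_Iio.2 hx) hr
        rw [hardyWeight, mul_rpow_of_ne_top coe_ne_top
          (rpow_ne_top_of_nonneg (by positivity) hU_top), ← ENNReal.rpow_mul]
        congr 2
        field_simp
    _ = ∫⁻ t in Iio r, ν (Iic t) ^ (-θ) ∂ν :=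
        (setLIntegral_dualLaw hψ hN measurableSet_Iio
          ((measurable_measure_Iic ν).pow_const _)).symm
    _ ≤ ENNReal.ofReal (1 - θ)⁻¹ * ν (Iio r) ^ (1 - θ) :=
        setLIntegral_Iio_measure_Iic_rpow_neg_le ν r h0 h1

theorem setLIntegral_lt_le_mul_setLIntegral_rpow_mul_hardyWeight (hψ : Measurable ψ)
    (hN : Measurable N) (hf : Measurable f) (hpp' : p.HolderConjugate p') (h0 : 0 < θ) (h1 : θ < 1)
    {r : α} (hr : dualLaw μ ψ N (p' / p) (Iio r) ≠ ∞) :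
    ∫⁻ x in {x | N x < r}, f x ∂μ ≤
      ENNReal.ofReal (1 - θ)⁻¹ ^ (1 / p') *
        (dualLaw μ ψ N (p' / p) (Iio r) ^ ((1 - θ) * p / p') *
          ∫⁻ x in {x | N x < r}, f x ^ p * hardyWeight μ ψ N p p' θ x ∂μ) ^ (1 / p) := by
  have hp : 0 < p := hpp'.pos
  have hp' : 0 < p' := hpp'.symm.pos
  set ν := dualLaw μ ψ N (p' / p)
  set w := hardyWeight μ ψ N p p' θ
  calc ∫⁻ x in {x | N x < r}, f x ∂μ
      ≤ (∫⁻ x in {x | N x < r}, f x ^ p * w x ∂μ) ^ (1 / p) *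
          (∫⁻ x in {x | N x < r}, w x ^ (-(p' / p)) ∂μ) ^ (1 / p') :=
        lintegral_le_lintegral_rpow_mul_weight hpp' hf (measurable_hardyWeight hψ hN)
          (ae_restrict_hardyWeight_ne_zero hψ hN hp hp' hr)
          (ae_restrict_hardyWeight_ne_top hN hp.le hp'.le h0.le hr)
    _ ≤ (∫⁻ x in {x | N x < r}, f x ^ p * w x ∂μ) ^ (1 / p) *
          (ENNReal.ofReal (1 - θ)⁻¹ * ν (Iio r) ^ (1 - θ)) ^ (1 / p') := by
        gcongr
        exact setLIntegral_hardyWeight_rpow_neg_le hψ hN hp hp' h0 h1 hr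
    _ = _ := by
        rw [ENNReal.mul_rpow_of_nonneg _ _ (by positivity : 0 ≤ 1 / p'),
          ENNReal.mul_rpow_of_nonneg _ _ (by positivity : 0 ≤ 1 / p), ← ENNReal.rpow_mul,
          ← ENNReal.rpow_mul, show (1 - θ) * p / p' * (1 / p) = (1 - θ) * (1 / p') by field_simp]
        ring

theorem lintegral_dualLaw_Iio_mul_setLIntegral_rpow_le [SFinite μ] [SigmaFinite κ]
    (hψ : Measurable ψ) (hN : Measurable N) (hf : Measurable f) (hp : 0 < p) (hp' : 0 < p')
    (hpq : p ≤ q) (h0 : 0 < θ) (h1 : θ < 1) (hB_top : B ≠ ∞)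
    (hB : ∀ r, κ (Ici r) ^ (1 / q) * dualLaw μ ψ N (p' / p) (Iio r) ^ (1 / p') ≤ B) :
    (∫⁻ r, (dualLaw μ ψ N (p' / p) (Iio r) ^ ((1 - θ) * p / p') *
      ∫⁻ x in {x | N x < r}, f x ^ p * hardyWeight μ ψ N p p' θ x ∂μ) ^ (q / p) ∂κ) ^ (q / p)⁻¹ ≤
      (ENNReal.ofReal θ⁻¹ * B ^ q) ^ (q / p)⁻¹ * ∫⁻ x, f x ^ p * ψ x ∂μ := by
  have hq : 0 < q := hp.trans_le hpq
  have hs : 0 < q / p := by positivity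
  set ν := dualLaw μ ψ N (p' / p)
  have hpow (c : ℝ) (t : ℝ≥0∞) : (t ^ (c * p / p')) ^ (q / p) = t ^ (c * q / p') := by
    rw [← ENNReal.rpow_mul]
    congr 1
    field_simp
  calc _ ≤ ∫⁻ x, f x ^ p * hardyWeight μ ψ N p p' θ x *
          (∫⁻ r in Ioi (N x), (ν (Iio r) ^ ((1 - θ) * p / p')) ^ (q / p) ∂κ) ^ (q / p)⁻¹ ∂μ :=
        lintegral_mul_setLIntegral_lt_rpow_le hN
          ((hf.pow_const _).mul (measurable_hardyWeight hψ hN))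
          ((measurable_measure_Iio ν).pow_const _) ((one_le_div hp).2 hpq)
    _ = ∫⁻ x, f x ^ p * ψ x * (ν (Iic (N x)) ^ (θ * q / p') *
          ∫⁻ r in Ioi (N x), ν (Iio r) ^ ((1 - θ) * q / p') ∂κ) ^ (q / p)⁻¹ ∂μ := by
        refine lintegral_congr fun x => ?_
        rw [ENNReal.mul_rpow_of_nonneg _ _ (inv_nonneg.2 hs.le), ← hpow θ,
          ENNReal.rpow_rpow_inv hs.ne', hardyWeight]
        simp only [hpow]
        ring
    _ ≤ ∫⁻ x, f x ^ p * ψ x * (ENNReal.ofReal θ⁻¹ * B ^ q) ^ (q / p)⁻¹ ∂μ := by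
        gcongr ∫⁻ x, _ * ?_ ^ _ ∂μ with x
        exact measure_Iic_rpow_mul_setLIntegral_Ioi_le hp' hq hB_top hB h0 h1 (N x)
    _ = (ENNReal.ofReal θ⁻¹ * B ^ q) ^ (q / p)⁻¹ * ∫⁻ x, f x ^ p * ψ x ∂μ := by
        rw [lintegral_mul_const _ (by fun_prop), mul_comm]

theorem lintegral_setLIntegral_lt_rpow_le_of_sigmaFinite [SFinite μ] [SigmaFinite κ]
    (hψ : Measurable ψ) (hN : Measurable N) (hf : Measurable f) (hpp' : p.HolderConjugate p')
    (hpq : p ≤ q) (h0 : 0 < θ) (h1 : θ < 1) (hB_top : B ≠ ∞)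
    (hB : ∀ r, κ (Ici r) ^ (1 / q) * dualLaw μ ψ N (p' / p) (Iio r) ^ (1 / p') ≤ B) :
    (∫⁻ r, (∫⁻ x in {x | N x < r}, f x ∂μ) ^ q ∂κ) ^ (1 / q) ≤
      ENNReal.ofReal (1 - θ)⁻¹ ^ (1 / p') * ENNReal.ofReal θ⁻¹ ^ (1 / q) * B *
        (∫⁻ x, f x ^ p * ψ x ∂μ) ^ (1 / p) := by
  have hp : 0 < p := hpp'.pos
  have hp' : 0 < p' := hpp'.symm.pos
  have hq : 0 < q := hp.trans_le hpq
  set ν := dualLaw μ ψ N (p' / p)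
  set G : α → ℝ≥0∞ := fun r => ν (Iio r) ^ ((1 - θ) * p / p') *
    ∫⁻ x in {x | N x < r}, f x ^ p * hardyWeight μ ψ N p p' θ x ∂μ
  have hG : ∀ᵐ r ∂κ, (∫⁻ x in {x | N x < r}, f x ∂μ) ^ q ≤
      (ENNReal.ofReal (1 - θ)⁻¹ ^ (1 / p')) ^ q * G r ^ (q / p) := by
    filter_upwards [ae_measure_Iio_ne_top hp' hq hB_top hB] with r hr
    calc (∫⁻ x in {x | N x < r}, f x ∂μ) ^ q
        ≤ (ENNReal.ofReal (1 - θ)⁻¹ ^ (1 / p') * G r ^ (1 / p)) ^ q := by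
          gcongr
          exact setLIntegral_lt_le_mul_setLIntegral_rpow_mul_hardyWeight hψ hN hf hpp' h0 h1 hr
      _ = (ENNReal.ofReal (1 - θ)⁻¹ ^ (1 / p')) ^ q * G r ^ (q / p) := by
          rw [ENNReal.mul_rpow_of_nonneg _ _ hq.le, ← ENNReal.rpow_mul (G r), one_div_mul_eq_div]
  calc (∫⁻ r, (∫⁻ x in {x | N x < r}, f x ∂μ) ^ q ∂κ) ^ (1 / q)
      ≤ ((ENNReal.ofReal (1 - θ)⁻¹ ^ (1 / p')) ^ q * ∫⁻ r, G r ^ (q / p) ∂κ) ^ (1 / q) := by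
        gcongr
        rw [← lintegral_const_mul' _ _ (by finiteness)]
        exact lintegral_mono_ae hG
    _ = ENNReal.ofReal (1 - θ)⁻¹ ^ (1 / p') *
          ((∫⁻ r, G r ^ (q / p) ∂κ) ^ (q / p)⁻¹) ^ (1 / p) := by
        rw [ENNReal.mul_rpow_of_nonneg _ _ (by positivity), one_div q, ENNReal.rpow_rpow_inv hq.ne',
          ← ENNReal.rpow_mul]
        congr 2
        field_simp
    _ ≤ ENNReal.ofReal (1 - θ)⁻¹ ^ (1 / p') *
          ((ENNReal.ofReal θ⁻¹ * B ^ q) ^ (q / p)⁻¹ * ∫⁻ x, f x ^ p * ψ x ∂μ) ^ (1 / p) := by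
        gcongr
        exact lintegral_dualLaw_Iio_mul_setLIntegral_rpow_le hψ hN hf hp hp' hpq h0 h1 hB_top hB
    _ = _ := by
        rw [ENNReal.mul_rpow_of_nonneg _ _ (by positivity : 0 ≤ 1 / p), ← ENNReal.rpow_mul,
          show (q / p)⁻¹ * (1 / p) = 1 / q by field_simp,
          ENNReal.mul_rpow_of_nonneg _ _ (by positivity : 0 ≤ 1 / q), one_div q,
          ENNReal.rpow_rpow_inv hq.ne']
        ring

theorem lintegral_setLIntegral_lt_rpow_eq_restrict (hψ : Measurable ψ) (hN : Measurable N)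
    (hp : 0 < p) (hp' : 0 < p') (hq : 0 < q) (hB_top : B ≠ ∞)
    (hB : ∀ r, κ (Ici r) ^ (1 / q) * dualLaw μ ψ N (p' / p) (Iio r) ^ (1 / p') ≤ B) :
    ∫⁻ r, (∫⁻ x in {x | N x < r}, f x ∂μ) ^ q ∂κ =
      ∫⁻ r in {r | κ (Ici r) ≠ ∞}, (∫⁻ x in {x | N x < r}, f x ∂μ.restrict
        (N ⁻¹' {t | dualLaw μ ψ N (p' / p) (Iic t) ≠ ∞})) ^ q ∂κ := by
  have hsupport : (Function.support fun r => (∫⁻ x in {x | N x < r}, f x ∂μ) ^ q) ⊆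
      {r | κ (Ici r) ≠ ∞} := by
    refine fun r hr htop => hr ?_
    have hnull : dualLaw μ ψ N (p' / p) (Iio r) = 0 := by
      by_contra hne
      have hpow : dualLaw μ ψ N (p' / p) (Iio r) ^ (1 / p') ≠ 0 := by
        simp [ENNReal.rpow_eq_zero_iff, hne, hp'.le]
      have hBr := hB r
      rw [htop, ENNReal.top_rpow_of_pos (by positivity), ENNReal.top_mul hpow] at hBr
      exact hB_top (top_le_iff.1 hBr)
    have hrestrict : μ.restrict {x | N x < r} = 0 :=
      restrict_preimage_eq_zero_of_dualLaw_eq_zero hψ hN (by positivity) measurableSet_Iio hnull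
    simp [hrestrict, hq]
  rw [← setLIntegral_eq_of_support_subset hsupport]
  refine lintegral_congr_ae (ae_restrict_of_ae ?_)
  filter_upwards [ae_measure_Iio_ne_top hp' hq hB_top hB] with r hr
  have hsub : {x | N x < r} ⊆ N ⁻¹' {t | dualLaw μ ψ N (p' / p) (Iic t) ≠ ∞} :=
    fun x hx => measure_ne_top_of_subset (Iic_subset_Iio.2 hx) hr
  rw [Measure.restrict_restrict (measurableSet_lt hN measurable_const),
    inter_eq_self_of_subset_left hsub]

theorem lintegral_setLIntegral_lt_rpow_le (hψ : Measurable ψ) (hN : Measurable N)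
    (hf : Measurable f) (hpp' : p.HolderConjugate p') (hpq : p ≤ q) (h0 : 0 < θ) (h1 : θ < 1)
    (hB_top : B ≠ ∞)
    (hB : ∀ r, κ (Ici r) ^ (1 / q) * dualLaw μ ψ N (p' / p) (Iio r) ^ (1 / p') ≤ B) :
    (∫⁻ r, (∫⁻ x in {x | N x < r}, f x ∂μ) ^ q ∂κ) ^ (1 / q) ≤
      ENNReal.ofReal (1 - θ)⁻¹ ^ (1 / p') * ENNReal.ofReal θ⁻¹ ^ (1 / q) * B *
        (∫⁻ x, f x ^ p * ψ x ∂μ) ^ (1 / p) := by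
  have hp : 0 < p := hpp'.pos
  have hp' : 0 < p' := hpp'.symm.pos
  have hq : 0 < q := hp.trans_le hpq
  set ν := dualLaw μ ψ N (p' / p)
  set T : Set α := {t | ν (Iic t) ≠ ∞}
  have hT : MeasurableSet T := (measurable_measure_Iic ν (measurableSet_singleton ∞)).compl
  have hν_restrict : dualLaw (μ.restrict (N ⁻¹' T)) ψ N (p' / p) = ν.restrict T :=
    dualLaw_restrict_preimage hN hT
  have : SigmaFinite (dualLaw (μ.restrict (N ⁻¹' T)) ψ N (p' / p)) :=
    hν_restrict ▸ sigmaFinite_restrict_setOf_measure_Iic_ne_top ν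
  have : SFinite (μ.restrict (N ⁻¹' T)) :=
    sFinite_of_sigmaFinite_dualLaw (c := p' / p) hψ hN (by positivity)
  have := sigmaFinite_restrict_setOf_measure_Ici_ne_top κ
  have hB_restrict (r : α) : κ.restrict {r | κ (Ici r) ≠ ∞} (Ici r) ^ (1 / q) *
      dualLaw (μ.restrict (N ⁻¹' T)) ψ N (p' / p) (Iio r) ^ (1 / p') ≤ B := by
    refine le_trans ?_ (hB r)
    rw [hν_restrict]
    gcongr <;> exact Measure.restrict_le_self
  rw [lintegral_setLIntegral_lt_rpow_eq_restrict hψ hN hp hp' hq hB_top hB]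
  refine (lintegral_setLIntegral_lt_rpow_le_of_sigmaFinite hψ hN hf hpp' hpq h0 h1 hB_top
    hB_restrict).trans ?_
  gcongr
  exact Measure.restrict_le_self

theorem lintegral_setLIntegral_lt_rpow_le_ofReal {t : ℝ} (hψ : Measurable ψ) (hN : Measurable N)
    (hf : Measurable f) (hpp' : p.HolderConjugate p') (hpq : p ≤ q) (ht : 1 < t) (hB_top : B ≠ ∞)
    (hB : ∀ r, κ (Ici r) ^ (1 / q) * dualLaw μ ψ N (p' / p) (Iio r) ^ (1 / p') ≤ B) :
    (∫⁻ r, (∫⁻ x in {x | N x < r}, f x ∂μ) ^ q ∂κ) ^ (1 / q) ≤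
      ENNReal.ofReal ((t / (t - 1)) ^ (1 / p') * t ^ (1 / q)) * B *
        (∫⁻ x, f x ^ p * ψ x ∂μ) ^ (1 / p) := by
  have ht0 : 0 < t := by linarith
  have ht_conj : 0 < t / (t - 1) := div_pos ht0 (sub_pos.2 ht)
  have hconst : (1 - t⁻¹)⁻¹ = t / (t - 1) := by field_simp
  rw [ENNReal.ofReal_mul (by positivity), ← ENNReal.ofReal_rpow_of_pos ht_conj,
    ← ENNReal.ofReal_rpow_of_pos ht0]
  simpa only [hconst, inv_inv] using lintegral_setLIntegral_lt_rpow_le hψ hN hf hpp' hpq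
    (inv_pos.2 ht0) (inv_lt_one_of_one_lt₀ ht) hB_top hB

end Hardy

theorem general_hardy_inequality_lt_general
    {X α : Type*} [MeasurableSpace X] [LinearOrder α] [TopologicalSpace α] [OrderClosedTopology α]
    [SecondCountableTopology α] [MeasurableSpace α] [BorelSpace α]
    (μ₁ μ₃ : Measure X) (μ₂ : Measure α)
    (ψ : X → ℝ≥0) (hψ : Measurable ψ)
    (hψμ : μ₁.withDensity (fun x => (ψ x : ℝ≥0∞)) ≤ μ₃)
    (N : X → α) (hN : Measurable N)
    (p q p' q' : ℝ) (hp : 1 < p) (hpq : p ≤ q)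
    (hp' : p' = p / (p - 1)) (hq' : q' = q / (q - 1))
    (B : ℝ≥0∞)
    (hB : B = ⨆ r : α, μ₂ (Set.Ici r) ^ (1 / q) *
      (∫⁻ x in {x | N x < r}, ((ψ x : ℝ≥0∞)) ^ (-(p' / p)) ∂μ₁) ^ (1 / p'))
    (hBfin : B ≠ ⊤) :
    ∀ f : X → ℝ≥0∞, Measurable f →
      (∫⁻ r, (∫⁻ x in {x | N x < r}, f x ∂μ₁) ^ q ∂μ₂) ^ (1 / q) ≤
        ENNReal.ofReal (min (p' ^ (1 / p') * p ^ (1 / q)) (q' ^ (1 / p') * q ^ (1 / q))) *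
          B * (∫⁻ x, f x ^ p ∂μ₃) ^ (1 / p) := by
  intro f hf
  have hpp' : p.HolderConjugate p' := hp' ▸ .conjExponent hp
  have hdensity : ∫⁻ x, f x ^ p * ψ x ∂μ₁ ≤ ∫⁻ x, f x ^ p ∂μ₃ := by
    calc ∫⁻ x, f x ^ p * ψ x ∂μ₁ = ∫⁻ x, f x ^ p ∂μ₁.withDensity fun x => ψ x := by
          simp [lintegral_withDensity_eq_lintegral_mul _ hψ.coe_nnreal_ennreal (hf.pow_const p),
            mul_comm]
      _ ≤ ∫⁻ x, f x ^ p ∂μ₃ := lintegral_mono' hψμ le_rfl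
  have hB_dual (r : α) : μ₂ (Set.Ici r) ^ (1 / q) *
      dualLaw μ₁ ψ N (p' / p) (Set.Iio r) ^ (1 / p') ≤ B := by
    rw [dualLaw_apply hN measurableSet_Iio, hB]
    exact le_iSup_of_le r le_rfl
  have hardy_of_one_lt {t : ℝ} (ht : 1 < t) :=
    (lintegral_setLIntegral_lt_rpow_le_ofReal hψ hN hf hpp' hpq ht hBfin hB_dual).trans
      (mul_le_mul_right (ENNReal.rpow_le_rpow hdensity hpp'.one_div_nonneg) _)
  rcases min_choice (p' ^ (1 / p') * p ^ (1 / q)) (q' ^ (1 / p') * q ^ (1 / q)) with h | h <;>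
    rw [h]
  · simpa only [← hp'] using hardy_of_one_lt hp
  · simpa only [← hq'] using hardy_of_one_lt (hp.trans_le hpq)

/-- General Hardy inequality (Theorem 1, sufficiency, with strict sublevel sets). -/
theorem general_hardy_inequality_lt
    {X : Type*} [MeasurableSpace X]
    (μ₁ μ₃ : Measure X) (μ₂ : Measure ℝ)
    (ψ : X → ℝ≥0) (hψ : Measurable ψ)
    (hψμ : μ₁.withDensity (fun x => (ψ x : ℝ≥0∞)) ≤ μ₃)
    (N : X → ℝ) (hN : Measurable N)
    (p q p' q' : ℝ) (hp : 1 < p) (hpq : p ≤ q)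
    (hp' : p' = p / (p - 1)) (hq' : q' = q / (q - 1))
    (B : ℝ≥0∞)
    (hB : B = ⨆ r : ℝ, μ₂ (Set.Ici r) ^ (1 / q) *
      (∫⁻ x in {x | N x < r}, ((ψ x : ℝ≥0∞)) ^ (-(p' / p)) ∂μ₁) ^ (1 / p'))
    (hBfin : B ≠ ⊤) :
    ∀ f : X → ℝ≥0∞, Measurable f →
      (∫⁻ r, (∫⁻ x in {x | N x < r}, f x ∂μ₁) ^ q ∂μ₂) ^ (1 / q) ≤
        ENNReal.ofReal (min (p' ^ (1 / p') * p ^ (1 / q)) (q' ^ (1 / p') * q ^ (1 / q))) *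
          B * (∫⁻ x, f x ^ p ∂μ₃) ^ (1 / p) := by
  exact general_hardy_inequality_lt_general μ₁ μ₃ μ₂ ψ hψ hψμ N hN p q p' q' hp hpq hp' hq'
    B hB hBfin
end

section
/- Let (X, M) be a measurable space, μ₁ a semi-finite positive measure on (X, M) (i.e., every M-measurable set E with μ₁(E) = +∞ contains an M-measurable subset F with 0 < μ₁(F) < +∞), μ₂ a positive Borel measure on ℝ, and μ₃ a positive measure on (X, M) whose absolutely continuous part with respect to μ₁ has a density ψ : X → [0,∞) with respect to μ₁. Let N : X → ℝ be M-measurable and let 1 < p ≤ q < ∞, with p' = p/(p−1). If C ≥ 0 is a constant such that (∫_ℝ (∫_{{x : N(x)<r}} f(x) dμ₁(x))^q dμ₂(r))^{1/q} ≤ C (∫_X f(x)^p dμ₃(x))^{1/p} for every M-measurable function f : X → [0,+∞], then sup_{r∈ℝ} μ₂([r,+∞))^{1/q} (∫_{{x : N(x)<r}} ψ(x)^{−p'/p} dμ₁(x))^{1/p'} ≤ C. -/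
open MeasureTheory ENNReal
open scoped NNReal

/-!
Dualise: testing the inequality on `f = ψ ^ (-p'/p)` over `{N < r}`, where `ψ * f ^ p ≤ f`, and
bounding the outer integral from below by its part over `[r, ∞)` gives
`μ₂([r, ∞)) ^ (1/q) * ∫ f ≤ C * (∫ f) ^ (1/p)`; dividing by `(∫ f) ^ (1/p)` is the claim.

Two points need care. The integral `∫ f` may be infinite, so `f` is replaced by measurable `g ≤ f`
of finite integral, for which `ψ * g ^ p ≤ g` still holds since `p > 1`; by semi-finiteness such `g`
exhaust `∫ f`. The singular part of `μ₃` is made invisible by changing `g` on a `μ₁`-null set.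
-/

section Semifinite

variable {X : Type*} [MeasurableSpace X] {μ : Measure X}

/-- Semi-finiteness of a measure: every measurable set of infinite measure has a measurable subset
of positive finite measure. It makes every integral the supremum of the finite integrals below
it. -/
def IsSemifinite (μ : Measure X) : Prop :=
  ∀ E : Set X, MeasurableSet E → μ E = ⊤ → ∃ F, F ⊆ E ∧ MeasurableSet F ∧ 0 < μ F ∧ μ F < ⊤

lemma exists_subset_forall_measure_le_of_bounded {E : Set X} {K : ℝ≥0∞} (hK : K ≠ ⊤)
    (hE : ∀ F ⊆ E, MeasurableSet F → μ F < ⊤ → μ F ≤ K) :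
    ∃ G ⊆ E, MeasurableSet G ∧ μ G < ⊤ ∧
      ∀ F ⊆ E, MeasurableSet F → μ F < ⊤ → μ F ≤ μ G := by
  let finiteSubsets : Set (Set X) := {F | F ⊆ E ∧ MeasurableSet F ∧ μ F < ⊤}
  have hne : (μ '' finiteSubsets).Nonempty :=
    ⟨μ ∅, ∅, ⟨Set.empty_subset E, MeasurableSet.empty, by simp⟩, rfl⟩
  obtain ⟨u, -, hu, hmem⟩ := exists_seq_tendsto_sSup hne (OrderTop.bddAbove _)
  choose F hF hFu using hmem
  have hsub : ⋃ n, F n ⊆ E := Set.iUnion_subset fun n => (hF n).1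
  have hmeas : MeasurableSet (⋃ n, F n) := MeasurableSet.iUnion fun n => (hF n).2.1
  have hbound : μ (⋃ n, F n) ≤ K := by
    rw [measure_iUnion_eq_iSup_accumulate]
    refine iSup_le fun n => hE _ ?_ ?_ ?_
    · exact (Set.accumulate_subset_iUnion n).trans hsub
    · exact .biUnion (Set.to_countable _) fun k _ => (hF k).2.1
    · exact measure_biUnion_lt_top (Set.finite_Iic n) fun k _ => (hF k).2.2
  refine ⟨⋃ n, F n, hsub, hmeas, hbound.trans_lt hK.lt_top, fun A hAE hA hAtop => ?_⟩
  calc μ A ≤ sSup (μ '' finiteSubsets) := le_sSup ⟨A, ⟨hAE, hA, hAtop⟩, rfl⟩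
    _ ≤ μ (⋃ n, F n) :=
      le_of_tendsto' hu fun n => hFu n ▸ measure_mono (Set.subset_iUnion F n)

namespace IsSemifinite

lemma exists_subset_lt_measure_lt_top (hμ : IsSemifinite μ) {E : Set X} (hE : MeasurableSet E)
    (hEtop : μ E = ⊤) {K : ℝ≥0∞} (hK : K ≠ ⊤) :
    ∃ F ⊆ E, MeasurableSet F ∧ K < μ F ∧ μ F < ⊤ := by
  by_contra! hbounded
  obtain ⟨G, hGE, hG, hGtop, hmax⟩ := exists_subset_forall_measure_le_of_bounded hK
    fun F hFE hF hFtop => not_lt.1 fun hlt => hFtop.not_ge (hbounded F hFE hF hlt)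
  obtain ⟨F, hFsub, hF, hFpos, hFtop⟩ :=
    hμ (E \ G) (hE.diff hG) (measure_sdiff_eq_top hEtop hGtop.ne)
  have hunion : μ (G ∪ F) = μ G + μ F :=
    measure_union (Set.disjoint_sdiff_right.mono_right hFsub) hF
  have hle : μ G + μ F ≤ μ G := hunion ▸ hmax (G ∪ F)
    (Set.union_subset hGE (hFsub.trans Set.sdiff_subset)) (hG.union hF)
    (measure_union_lt_top hGtop hFtop)
  exact hle.not_gt (ENNReal.lt_add_right hGtop.ne hFpos.ne')

lemma exists_le_lt_lintegral_lt_top (hμ : IsSemifinite μ) {w : X → ℝ≥0∞} {K : ℝ≥0∞}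
    (hK : K < ∫⁻ x, w x ∂μ) :
    ∃ g : X → ℝ≥0∞, Measurable g ∧ g ≤ w ∧ K < ∫⁻ x, g x ∂μ ∧ ∫⁻ x, g x ∂μ < ⊤ := by
  obtain ⟨φ, hφw, hKφ⟩ : ∃ φ : SimpleFunc X ℝ≥0, (∀ x, (φ x : ℝ≥0∞) ≤ w x) ∧
      K < (φ.map ((↑) : ℝ≥0 → ℝ≥0∞)).lintegral μ := by
    simpa only [lintegral_eq_nnreal, lt_iSup_iff, exists_prop] using hK
  by_cases hfin : φ.FinMeasSupp μ
  · refine ⟨φ.map ((↑) : ℝ≥0 → ℝ≥0∞), SimpleFunc.measurable _, hφw, ?_, ?_⟩ <;>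
      rw [SimpleFunc.lintegral_eq_lintegral]
    · exact hKφ
    · exact (hfin.map rfl).lintegral_lt_top (.of_forall fun x => coe_ne_top)
  · obtain ⟨y, hy, hlevel⟩ : ∃ y ≠ 0, μ (φ ⁻¹' {y}) = ⊤ := by
      simpa only [SimpleFunc.finMeasSupp_iff, not_forall, not_lt_top, exists_prop] using hfin
    have hy' : (y : ℝ≥0∞) ≠ 0 := coe_ne_zero.2 hy
    obtain ⟨F, hFsub, hF, hKF, hFtop⟩ := hμ.exists_subset_lt_measure_lt_top
      (φ.measurableSet_fiber y) hlevel (div_ne_top hK.ne_top hy')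
    refine ⟨F.indicator fun _ => y, measurable_const.indicator hF,
      Set.indicator_le fun x hx => hFsub hx ▸ hφw x, ?_, ?_⟩ <;>
      rw [lintegral_indicator_const hF]
    · rwa [mul_comm, ← ENNReal.div_lt_iff (.inl hy') (.inl coe_ne_top)]
    · exact mul_lt_top coe_lt_top hFtop

lemma lintegral_eq_iSup_lintegral_lt_top (hμ : IsSemifinite μ) (w : X → ℝ≥0∞) :
    ∫⁻ x, w x ∂μ =
      ⨆ g : {g : X → ℝ≥0∞ // Measurable g ∧ g ≤ w ∧ ∫⁻ x, g x ∂μ < ⊤}, ∫⁻ x, g.1 x ∂μ := by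
  refine le_antisymm (le_of_forall_lt fun K hK => ?_) (iSup_le fun g => lintegral_mono g.2.2.1)
  obtain ⟨g, hg, hgw, hKg, hgtop⟩ := hμ.exists_le_lt_lintegral_lt_top hK
  exact lt_iSup_iff.2 ⟨⟨g, hg, hgw, hgtop⟩, hKg⟩

end IsSemifinite

end Semifinite

section TestFunctions

variable {X : Type*} [MeasurableSpace X] {μ σ : Measure X} {p p' : ℝ}

lemma exists_measurable_ae_eq_ae_eq_of_mutuallySingular {β : Type*} [MeasurableSpace β]
    (h : σ.MutuallySingular μ) {f g : X → β} (hf : Measurable f) (hg : Measurable g) :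
    ∃ k : X → β, Measurable k ∧ k =ᵐ[σ] f ∧ k =ᵐ[μ] g := by
  classical
  obtain ⟨S, hS, hσS, hμS⟩ := h
  refine ⟨S.piecewise g f, hg.piecewise hS hf, ?_, ?_⟩
  · filter_upwards [measure_eq_zero_iff_ae_notMem.1 hσS] with x hx
    exact Set.piecewise_eq_of_notMem _ _ _ hx
  · filter_upwards [mem_ae_iff.2 hμS] with x hx
    exact Set.piecewise_eq_of_mem _ _ _ hx

lemma mul_rpow_le_self_of_le_rpow_neg (hp : p.HolderConjugate p') {a b : ℝ≥0∞}
    (hb : b ≤ a ^ (-(p' / p))) : a * b ^ p ≤ b := by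
  have hexp : -(p' / p) * (p - 1) = -1 := by
    rw [hp.symm.div_conj_eq_sub_one]
    linear_combination -hp.mul_eq_add
  have hb' : b ^ (p - 1) ≤ a⁻¹ := by
    calc b ^ (p - 1) ≤ (a ^ (-(p' / p))) ^ (p - 1) :=
          rpow_le_rpow hb hp.sub_one_pos.le
      _ = a⁻¹ := by rw [← rpow_mul, hexp, rpow_neg_one]
  calc a * b ^ p = a * (b ^ (p - 1) * b) := by
        nth_rw 3 [← rpow_one b]
        rw [← rpow_add_of_nonneg _ _ hp.sub_one_pos.le zero_le_one, sub_add_cancel]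
    _ ≤ a * (a⁻¹ * b) := by gcongr
    _ = a * a⁻¹ * b := (mul_assoc _ _ _).symm
    _ ≤ b := mul_le_of_le_one_left' (ENNReal.mul_inv_le_one a)

lemma lintegral_rpow_withDensity_add_le (hp : p.HolderConjugate p') {ψ f g : X → ℝ≥0∞}
    (hψ : Measurable ψ) (hf : Measurable f) (hfσ : f =ᵐ[σ] 0) (hfg : f =ᵐ[μ] g)
    (hg : ∀ x, g x ≤ ψ x ^ (-(p' / p))) :
    ∫⁻ x, f x ^ p ∂(μ.withDensity ψ + σ) ≤ ∫⁻ x, g x ∂μ := by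
  have hsing : ∫⁻ x, f x ^ p ∂σ = 0 := by
    refine lintegral_eq_zero_of_ae_eq_zero ?_
    filter_upwards [hfσ] with x hx
    simp [hx, hp.pos]
  calc ∫⁻ x, f x ^ p ∂(μ.withDensity ψ + σ) = ∫⁻ x, ψ x * f x ^ p ∂μ := by
        rw [lintegral_add_measure, hsing, add_zero,
          lintegral_withDensity_eq_lintegral_mul _ hψ (hf.pow_const p)]
        rfl
    _ ≤ ∫⁻ x, g x ∂μ := by
        refine lintegral_mono_ae ?_
        filter_upwards [hfg] with x hx
        rw [hx]
        exact mul_rpow_le_self_of_le_rpow_neg hp (hg x)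

lemma mul_iSup_rpow {ι : Sort*} {s : ℝ} (hs : 0 < s) (a : ℝ≥0∞) (f : ι → ℝ≥0∞) :
    a * (⨆ i, f i) ^ s = ⨆ i, a * f i ^ s := by
  rw [← mul_iSup]
  exact congrArg (a * ·) ((orderIsoRpow s hs).map_iSup f)

lemma mul_rpow_one_div_le_of_mul_le (hp : p.HolderConjugate p') {M I C : ℝ≥0∞} (hI : I ≠ ⊤)
    (h : M * I ≤ C * I ^ (1 / p)) : M * I ^ (1 / p') ≤ C := by
  rcases eq_or_ne I 0 with rfl | hI0
  · simp [hp.symm.pos]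
  have hsplit : I ^ (1 / p') * I ^ (1 / p) = I := by
    rw [← rpow_add_of_nonneg _ _ hp.symm.one_div_nonneg hp.one_div_nonneg,
      hp.symm.one_div_add_one_div, one_div_one, rpow_one]
  rwa [← ENNReal.mul_le_mul_iff_left (rpow_pos (pos_iff_ne_zero.2 hI0) hI).ne'
    (rpow_ne_top_of_nonneg hp.one_div_nonneg hI), mul_assoc, hsplit]

end TestFunctions

lemma rpow_measure_Ici_mul_le_of_monotone {α : Type*} [Preorder α] [TopologicalSpace α]
    [ClosedIciTopology α] [MeasurableSpace α] [OpensMeasurableSpace α] (ν : Measure α)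
    {F : α → ℝ≥0∞} (hF : Monotone F) {q : ℝ} (hq : 0 < q) (r : α) :
    ν (Set.Ici r) ^ (1 / q) * F r ≤ (∫⁻ t, F t ^ q ∂ν) ^ (1 / q) := by
  calc ν (Set.Ici r) ^ (1 / q) * F r = (F r ^ q * ν (Set.Ici r)) ^ (1 / q) := by
        rw [mul_rpow_of_nonneg _ _ (by positivity), ← rpow_mul, mul_one_div_cancel hq.ne',
          rpow_one, mul_comm]
    _ = (∫⁻ _ in Set.Ici r, F r ^ q ∂ν) ^ (1 / q) := by rw [setLIntegral_const]
    _ ≤ (∫⁻ t in Set.Ici r, F t ^ q ∂ν) ^ (1 / q) := by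
        gcongr ?_ ^ _
        exact setLIntegral_mono' measurableSet_Ici fun t ht => rpow_le_rpow (hF ht) hq.le
    _ ≤ (∫⁻ t, F t ^ q ∂ν) ^ (1 / q) := by
        gcongr ?_ ^ _
        exact setLIntegral_le_lintegral _ _

theorem general_hardy_inequality_lt_necessity_general
    {X α : Type*} [MeasurableSpace X] [LinearOrder α] [TopologicalSpace α] [ClosedIciTopology α]
    [MeasurableSpace α] [OpensMeasurableSpace α]
    {μ₁ μ₃ σ : Measure X} {μ₂ : Measure α} (hμ₁ : IsSemifinite μ₁)
    {ψ : X → ℝ≥0∞} (hψ : Measurable ψ) (hσ : σ.MutuallySingular μ₁)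
    (hdec : μ₃ = μ₁.withDensity ψ + σ) {N : X → α} (hN : Measurable N)
    {p q p' : ℝ} (hp : p.HolderConjugate p') (hq : 0 < q) {C : ℝ≥0∞}
    (hineq : ∀ f : X → ℝ≥0∞, Measurable f →
      (∫⁻ r, (∫⁻ x in {x | N x < r}, f x ∂μ₁) ^ q ∂μ₂) ^ (1 / q) ≤
        C * (∫⁻ x, f x ^ p ∂μ₃) ^ (1 / p)) :
    (⨆ r : α, μ₂ (Set.Ici r) ^ (1 / q) *
      (∫⁻ x in {x | N x < r}, ψ x ^ (-(p' / p)) ∂μ₁) ^ (1 / p')) ≤ C := by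
  refine iSup_le fun r => ?_
  have hA : MeasurableSet {x | N x < r} := hN measurableSet_Iio
  rw [← lintegral_indicator hA, hμ₁.lintegral_eq_iSup_lintegral_lt_top,
    mul_iSup_rpow hp.symm.one_div_pos]
  refine iSup_le fun ⟨g, hg, hgw, hgtop⟩ => mul_rpow_one_div_le_of_mul_le hp hgtop.ne ?_
  obtain ⟨f, hf, hfσ, hfg⟩ :=
    exists_measurable_ae_eq_ae_eq_of_mutuallySingular hσ measurable_zero hg
  have hmono : Monotone fun t => ∫⁻ x in {x | N x < t}, f x ∂μ₁ :=
    fun s t hst => lintegral_mono_set fun x hx => lt_of_lt_of_le hx hst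
  have hgsupp : g.support ⊆ {x | N x < r} := fun x hx =>
    Set.mem_of_indicator_ne_zero ((pos_iff_ne_zero.2 hx).trans_le (hgw x)).ne'
  have hgψ (x : X) : g x ≤ ψ x ^ (-(p' / p)) := (hgw x).trans (Set.indicator_le_self _ _ x)
  calc μ₂ (Set.Ici r) ^ (1 / q) * ∫⁻ x, g x ∂μ₁
      = μ₂ (Set.Ici r) ^ (1 / q) * ∫⁻ x in {x | N x < r}, f x ∂μ₁ := by
        rw [lintegral_congr_ae (ae_restrict_of_ae hfg), setLIntegral_eq_of_support_subset hgsupp]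
    _ ≤ (∫⁻ t, (∫⁻ x in {x | N x < t}, f x ∂μ₁) ^ q ∂μ₂) ^ (1 / q) :=
        rpow_measure_Ici_mul_le_of_monotone μ₂ hmono hq r
    _ ≤ C * (∫⁻ x, f x ^ p ∂μ₃) ^ (1 / p) := hineq f hf
    _ ≤ C * (∫⁻ x, g x ∂μ₁) ^ (1 / p) := by
        rw [hdec]
        gcongr C * ?_ ^ (1 / p)
        · exact hp.one_div_nonneg
        · exact lintegral_rpow_withDensity_add_le hp hψ hf hfσ hfg hgψ

/-- General Hardy inequality (Theorem 1, necessity, with strict sublevel sets):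
if the Hardy inequality holds with constant `C`, then `B ≤ C`. -/
theorem general_hardy_inequality_lt_necessity
    {X : Type*} [MeasurableSpace X]
    (μ₁ μ₃ : Measure X) (μ₂ : Measure ℝ)
    (hsf : ∀ E : Set X, MeasurableSet E → μ₁ E = ⊤ →
      ∃ F, F ⊆ E ∧ MeasurableSet F ∧ 0 < μ₁ F ∧ μ₁ F < ⊤)
    (ψ : X → ℝ≥0) (hψ : Measurable ψ)
    (σ : Measure X) (hσ : σ.MutuallySingular μ₁)
    (hdec : μ₃ = μ₁.withDensity (fun x => (ψ x : ℝ≥0∞)) + σ)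
    (N : X → ℝ) (hN : Measurable N)
    (p q p' : ℝ) (hp : 1 < p) (hpq : p ≤ q)
    (hp' : p' = p / (p - 1))
    (C : ℝ) (hC : 0 ≤ C)
    (hineq : ∀ f : X → ℝ≥0∞, Measurable f →
      (∫⁻ r, (∫⁻ x in {x | N x < r}, f x ∂μ₁) ^ q ∂μ₂) ^ (1 / q) ≤
        ENNReal.ofReal C * (∫⁻ x, f x ^ p ∂μ₃) ^ (1 / p)) :
    (⨆ r : ℝ, μ₂ (Set.Ici r) ^ (1 / q) *
      (∫⁻ x in {x | N x < r}, ((ψ x : ℝ≥0∞)) ^ (-(p' / p)) ∂μ₁) ^ (1 / p')) ≤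
      ENNReal.ofReal C := by
  exact general_hardy_inequality_lt_necessity_general hsf hψ.coe_nnreal_ennreal hσ hdec hN
    ((Real.holderConjugate_iff_eq_conjExponent hp).2 hp') (by linarith) hineq
end
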